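/- arXiv:1209.4597 — 2 statements merged into one kernel-verified Lean document; each statement's English description precedes it below -/
import Mathlib

section
/- Let f : V' → V and g : V → V' be k-linear maps such that f∘g is finite potent. Then g∘f is finite potent and tr_V(f∘g) = tr_{V'}(g∘f). -/
/-!
If finite-dimensional subspaces `W ≤ V` and `W' ≤ V'` satisfy `g W ≤ W'` and `f W' ≤ W`, then
`f ∘ g` on `W` and `g ∘ f` on `W'` have the same trace, by the finite-dimensional identity
`tr (ab) = tr (ba)` (`trace_restrict_comp_comm`).

Applied to `f = id` and `g = φ`, this says that the trace of `φ` on `W` equals its trace on any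
`W'` with `φ W ≤ W' ≤ W`; iterating, the same holds for every invariant `U ≤ W` that contains
some `φⁿ W` (`trace_restrict_eq_of_pow_le`). Comparing two admissible subspaces with their
intersection shows that Tate's trace is well defined (`tateTrace_eq`).

For the theorem, take `W = range ((f ∘ g)ⁿ)`, of finite dimension, and `W' = g W`. Since
`(g ∘ f)ⁿ⁺¹ = g ∘ (f ∘ g)ⁿ ∘ f` has range in `W'`, the subspace `W'` computes Tate's trace of
`g ∘ f`, and the first paragraph applies to `W` and `W'`.
-/


/-- An endomorphism is finite potent if some power has finite-dimensional range. -/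
def IsFinitePotent {k V : Type*} [Field k] [AddCommGroup V] [Module k V]
    (φ : V →ₗ[k] V) : Prop :=
  ∃ n : ℕ, FiniteDimensional k (LinearMap.range (φ ^ n))

/-- `c` is a value of Tate's trace of `φ`: the ordinary trace of the restriction of `φ` to
any finite-dimensional `φ`-invariant subspace `W` with `φⁿ V ⊆ W` for some `n` equals `c`. -/
def TateTraceSpec {k V : Type*} [Field k] [AddCommGroup V] [Module k V]
    (φ : V →ₗ[k] V) (c : k) : Prop :=
  ∀ (W : Submodule k V) (hW : ∀ x ∈ W, φ x ∈ W), FiniteDimensional k W →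
    (∃ n : ℕ, LinearMap.range (φ ^ n) ≤ W) →
    LinearMap.trace k W (φ.restrict hW) = c

open Classical in
/-- Tate's trace of a finite potent endomorphism. -/
noncomputable def tateTrace {k V : Type*} [Field k] [AddCommGroup V] [Module k V]
    (φ : V →ₗ[k] V) : k :=
  if h : ∃ c, TateTraceSpec φ c then h.choose else 0

section

variable {k V V' : Type*} [Field k] [AddCommGroup V] [Module k V] [AddCommGroup V'] [Module k V']

theorem trace_restrict_comp_comm (f : V' →ₗ[k] V) (g : V →ₗ[k] V')
    (W : Submodule k V) (W' : Submodule k V') [FiniteDimensional k W] [FiniteDimensional k W']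
    (hg : ∀ x ∈ W, g x ∈ W') (hf : ∀ x ∈ W', f x ∈ W)
    (h1 : ∀ x ∈ W, (f ∘ₗ g) x ∈ W) (h2 : ∀ x ∈ W', (g ∘ₗ f) x ∈ W') :
    LinearMap.trace k W ((f ∘ₗ g).restrict h1) =
      LinearMap.trace k W' ((g ∘ₗ f).restrict h2) :=
  LinearMap.trace_comp_comm' (g.restrict hg) (f.restrict hf)

theorem pow_apply_mem {φ : V →ₗ[k] V} {W : Submodule k V} (hW : ∀ x ∈ W, φ x ∈ W) (n : ℕ) :
    ∀ x ∈ W, (φ ^ n) x ∈ W := by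
  induction n with
  | zero => intro x hx; simpa using hx
  | succ n ih =>
    intro x hx
    rw [pow_succ, Module.End.mul_apply]
    exact ih _ (hW x hx)

/-- An invariant subspace `U` of `W` on whose quotient `W / U` the map `φ` is nilpotent
carries the full trace of `φ` on `W`. -/
theorem trace_restrict_eq_of_pow_le (φ : V →ₗ[k] V) (U : Submodule k V)
    (hU : ∀ x ∈ U, φ x ∈ U) (n : ℕ) :
    ∀ (W : Submodule k V) (hW : ∀ x ∈ W, φ x ∈ W), FiniteDimensional k W → U ≤ W →
      (∀ x ∈ W, (φ ^ n) x ∈ U) →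
      LinearMap.trace k W (φ.restrict hW) = LinearMap.trace k U (φ.restrict hU) := by
  induction n with
  | zero =>
    intro W hW _ hUW hn
    obtain rfl : U = W := le_antisymm hUW fun x hx => by simpa using hn x hx
    rfl
  | succ n ih =>
    intro W hW _ hUW hn
    -- `U + φ W` lies between `φ W` and `W`, and `φⁿ` maps it into `U`.
    set W' : Submodule k V := U ⊔ W.map φ with hW'
    have hle : W' ≤ W := sup_le hUW (Submodule.map_le_iff_le_comap.2 hW)
    have hφ : ∀ x ∈ W, φ x ∈ W' := fun x hx =>
      (le_sup_right : W.map φ ≤ W') (Submodule.mem_map_of_mem hx)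
    have hinv : ∀ x ∈ W', φ x ∈ W' := fun x hx => hφ x (hle hx)
    have hfin : FiniteDimensional k W' := Submodule.finiteDimensional_of_le hle
    have hpow : W' ≤ U.comap (φ ^ n) := by
      refine sup_le (pow_apply_mem hU n) ?_
      rintro _ ⟨y, hy, rfl⟩
      have := hn y hy
      rwa [pow_succ, Module.End.mul_apply] at this
    rw [← ih W' hinv hfin le_sup_left hpow]
    exact trace_restrict_comp_comm LinearMap.id φ W W' hφ (fun x hx => hle hx) hW hinv

/-- Tate's trace is computed by any admissible subspace. -/
theorem tateTrace_eq (φ : V →ₗ[k] V) (W : Submodule k V) (hW : ∀ x ∈ W, φ x ∈ W)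
    (hfin : FiniteDimensional k W) (hn : ∃ n : ℕ, LinearMap.range (φ ^ n) ≤ W) :
    tateTrace φ = LinearMap.trace k W (φ.restrict hW) := by
  have h : ∃ c, TateTraceSpec φ c := by
    refine ⟨LinearMap.trace k W (φ.restrict hW), fun W₂ hW₂ hfin₂ hn₂ => ?_⟩
    obtain ⟨n, hn⟩ := hn
    obtain ⟨m, hm⟩ := hn₂
    have hinf : ∀ x ∈ W ⊓ W₂, φ x ∈ W ⊓ W₂ := fun x hx => ⟨hW x hx.1, hW₂ x hx.2⟩
    rw [trace_restrict_eq_of_pow_le φ (W ⊓ W₂) hinf m W hW hfin inf_le_left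
        fun x hx => ⟨pow_apply_mem hW m x hx, hm ⟨x, rfl⟩⟩,
      trace_restrict_eq_of_pow_le φ (W ⊓ W₂) hinf n W₂ hW₂ hfin₂ inf_le_right
        fun x hx => ⟨hn ⟨x, rfl⟩, pow_apply_mem hW₂ n x hx⟩]
  rw [tateTrace, dif_pos h]
  exact (h.choose_spec W hW hfin hn).symm

theorem comp_pow_succ_apply (f : V' →ₗ[k] V) (g : V →ₗ[k] V') (n : ℕ) (x : V') :
    ((g ∘ₗ f) ^ (n + 1)) x = g (((f ∘ₗ g) ^ n) (f x)) := by
  induction n generalizing x with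
  | zero => simp
  | succ n ih =>
    rw [pow_succ, Module.End.mul_apply, ih, pow_succ (f ∘ₗ g), Module.End.mul_apply]
    rfl

end

theorem tateTrace_comp_comm
    {k V V' : Type*} [Field k] [AddCommGroup V] [Module k V]
    [AddCommGroup V'] [Module k V']
    (f : V' →ₗ[k] V) (g : V →ₗ[k] V') (h : IsFinitePotent (f ∘ₗ g)) :
    IsFinitePotent (g ∘ₗ f) ∧ tateTrace (f ∘ₗ g) = tateTrace (g ∘ₗ f) := by
  obtain ⟨n, hfin⟩ := h
  set W := LinearMap.range ((f ∘ₗ g) ^ n) with hWdef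
  have hW : ∀ x ∈ W, (f ∘ₗ g) x ∈ W := by
    rintro _ ⟨y, rfl⟩
    refine ⟨(f ∘ₗ g) y, ?_⟩
    rw [← Module.End.mul_apply, ← Module.End.mul_apply, ← pow_succ, ← pow_succ']
  have hg : ∀ x ∈ W, g x ∈ W.map g := fun x hx => Submodule.mem_map_of_mem hx
  have hf : ∀ x ∈ W.map g, f x ∈ W := by
    rintro _ ⟨y, hy, rfl⟩
    exact hW y hy
  have hW' : ∀ x ∈ W.map g, (g ∘ₗ f) x ∈ W.map g := fun x hx => hg _ (hf x hx)
  have hrange : LinearMap.range ((g ∘ₗ f) ^ (n + 1)) ≤ W.map g := by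
    rintro _ ⟨x, rfl⟩
    rw [comp_pow_succ_apply]
    exact hg _ ⟨f x, rfl⟩
  have hfin' : FiniteDimensional k (W.map g) := inferInstance
  refine ⟨⟨n + 1, Submodule.finiteDimensional_of_le hrange⟩, ?_⟩
  rw [tateTrace_eq (f ∘ₗ g) W hW hfin ⟨n, le_rfl⟩,
    tateTrace_eq (g ∘ₗ f) (W.map g) hW' hfin' ⟨n + 1, hrange⟩]
  exact trace_restrict_comp_comm f g W (W.map g) hg hf hW hW'
end

section
/- Let V be a k-vector space with basis {v_j}_{j≥1} and φ = θ₁ + θ₂ the operator from the counter-example, which is finite potent with invariant decomposition V = span(v₁,v₂) ⊕ span{v_r : r ≥ 3}, where φ restricted to span(v₁,v₂) has matrix [[2,1],[−1,−1]] and φ is nilpotent on the complement. Then tr_V(φ) = 1. -/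
/-- The standard basis `v j = single j 1` of the space with countable basis `{v_j}_{j ≥ 1}`. -/
noncomputable def v (k : Type*) [Field k] (j : ℕ+) : ℕ+ →₀ k := Finsupp.single j 1

/-- Induction along the residues modulo four used in the description of `φ`. -/
lemma pnat_cases_mod_four {p : ℕ+ → Prop} (h1 : p 1) (h2 : p 2) (h3 : p 3)
    (h : ∀ m : ℕ+, p (4 * m) ∧ p (4 * m + 1) ∧ p (4 * m + 2) ∧ p (4 * m + 3)) (j : ℕ+) : p j := by
  have hj := j.pos
  by_cases hlt : (j : ℕ) < 4
  · have : j = 1 ∨ j = 2 ∨ j = 3 := by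
      rw [← PNat.coe_inj, ← PNat.coe_inj, ← PNat.coe_inj]
      change (j : ℕ) = 1 ∨ (j : ℕ) = 2 ∨ (j : ℕ) = 3
      omega
    rcases this with rfl | rfl | rfl <;> assumption
  · let m : ℕ+ := ⟨j / 4, by omega⟩
    have hm : (m : ℕ) = j / 4 := rfl
    have : j = 4 * m ∨ j = 4 * m + 1 ∨ j = 4 * m + 2 ∨ j = 4 * m + 3 := by
      simp only [← PNat.coe_inj, PNat.add_coe, PNat.mul_coe]
      change (j : ℕ) = 4 * m ∨ (j : ℕ) = 4 * m + 1 ∨ (j : ℕ) = 4 * m + 2 ∨ (j : ℕ) = 4 * m + 3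
      omega
    obtain ⟨ha, hb, hc, hd⟩ := h m
    rcases this with h | h | h | h <;> rw [h] <;> assumption

/-- The relations on the basis vectors of index at least three force the fourth power of the
operator to vanish on them. This applies both to `φ` and to its nilpotent part. -/
lemma pow_four_apply_v {k : Type*} [Field k] (ψ : (ℕ+ →₀ k) →ₗ[k] (ℕ+ →₀ k))
    (h3 : ψ (v k 3) = v k 5)
    (h4k : ∀ m : ℕ+, ψ (v k (4 * m)) = v k (4 * m + 1) + v k (4 * m + 3))
    (h4k1 : ∀ m : ℕ+, ψ (v k (4 * m + 1)) = v k (4 * m + 3))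
    (h4k2 : ∀ m : ℕ+, ψ (v k (4 * m + 2)) =
      v k (4 * m + 3) - v k (4 * m + 4) + v k (4 * m + 5))
    (h4k3 : ∀ m : ℕ+, ψ (v k (4 * m + 3)) = 0) (j : ℕ+) (hj1 : j ≠ 1) (hj2 : j ≠ 2) :
    (ψ ^ 4) (v k j) = 0 := by
  have hpow : ∀ x, (ψ ^ 4) x = ψ (ψ (ψ (ψ x))) := fun x => by
    simp [pow_succ, Module.End.mul_apply]
  rw [hpow]
  revert hj1 hj2
  induction j using pnat_cases_mod_four with
  | h1 => intro h; exact absurd rfl h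
  | h2 => intro _ h; exact absurd rfl h
  | h3 =>
    intro _ _
    have e5 : ψ (v k 5) = v k 7 := h4k1 1
    have e7 : ψ (v k 7) = 0 := h4k3 1
    rw [h3, e5, e7, map_zero]
  | h m =>
    refine ⟨fun _ _ => ?_, fun _ _ => ?_, fun _ _ => ?_, fun _ _ => ?_⟩
    · simp [h4k, h4k1, h4k3]
    · simp [h4k1, h4k3]
    · have e4 : (4 * m + 4 : ℕ+) = 4 * (m + 1) := by rw [mul_add, mul_one]
      have e5 : (4 * m + 5 : ℕ+) = 4 * (m + 1) + 1 := by rw [mul_add, mul_one, add_assoc]; rfl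
      rw [h4k2, e4, e5]
      simp [h4k, h4k1, h4k3]
    · simp [h4k3]

lemma range_le_of_v {k : Type*} [Field k] (ψ : (ℕ+ →₀ k) →ₗ[k] (ℕ+ →₀ k))
    (W : Submodule k (ℕ+ →₀ k)) (h : ∀ j, ψ (v k j) ∈ W) : LinearMap.range ψ ≤ W := by
  rintro _ ⟨x, rfl⟩
  induction x using Finsupp.induction_linear with
  | zero => simp
  | add f g hf hg => rw [map_add]; exact W.add_mem hf hg
  | single j a =>
    have : Finsupp.single j a = a • v k j := by simp [v]
    rw [this, map_smul]
    exact W.smul_mem _ (h j)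

/-- If an endomorphism differs from an operator of rank at most two by a nilpotent one, its trace
on an invariant finite-dimensional subspace containing the range of the rank-two part is the trace
of that part. -/
lemma trace_restrict_of_sub_smulRight_nilpotent {k V : Type*} [Field k] [AddCommGroup V]
    [Module k V] (φ : V →ₗ[k] V) (c₁ c₂ : V →ₗ[k] k) (w₁ w₂ : V)
    (hB : (φ - (c₁.smulRight w₁ + c₂.smulRight w₂)) ^ 4 = 0)
    (W : Submodule k V) (hW : ∀ x ∈ W, φ x ∈ W) [FiniteDimensional k W]
    (hw₁ : w₁ ∈ W) (hw₂ : w₂ ∈ W) :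
    LinearMap.trace k W (φ.restrict hW) = c₁ w₁ + c₂ w₂ := by
  let A : W →ₗ[k] W :=
    (c₁ ∘ₗ W.subtype).smulRight ⟨w₁, hw₁⟩ + (c₂ ∘ₗ W.subtype).smulRight ⟨w₂, hw₂⟩
  have hN : IsNilpotent (φ.restrict hW - A) := by
    refine ⟨4, LinearMap.ext fun x => Subtype.ext ?_⟩
    have hstep : ∀ y : W, (((φ.restrict hW - A) y : W) : V) =
        (φ - (c₁.smulRight w₁ + c₂.smulRight w₂)) y := fun y => rfl
    have := LinearMap.congr_fun hB (x : V)
    simp only [pow_succ, pow_zero, one_mul, Module.End.mul_apply] at this ⊢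
    rw [hstep, hstep, hstep, hstep, this]
    rfl
  have htr : LinearMap.trace k W (φ.restrict hW - A) = 0 :=
    (LinearMap.isNilpotent_trace_of_isNilpotent hN).eq_zero
  rw [map_sub, sub_eq_zero] at htr
  rw [htr, map_add, LinearMap.trace_smulRight, LinearMap.trace_smulRight]
  rfl

theorem tateTrace_phi_eq_one {k : Type*} [Field k]
    (φ : (ℕ+ →₀ k) →ₗ[k] (ℕ+ →₀ k))
    (h1 : φ (v k 1) = (2 : k) • v k 1 - v k 2)
    (h2 : φ (v k 2) = v k 1 - v k 2)
    (h3 : φ (v k 3) = v k 5)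
    (h4k : ∀ m : ℕ+, φ (v k (4 * m)) = v k (4 * m + 1) + v k (4 * m + 3))
    (h4k1 : ∀ m : ℕ+, φ (v k (4 * m + 1)) = v k (4 * m + 3))
    (h4k2 : ∀ m : ℕ+, φ (v k (4 * m + 2)) =
      v k (4 * m + 3) - v k (4 * m + 4) + v k (4 * m + 5))
    (h4k3 : ∀ m : ℕ+, φ (v k (4 * m + 3)) = 0) :
    IsFinitePotent φ ∧ tateTrace φ = 1 := by
  set W₀ : Submodule k (ℕ+ →₀ k) := Submodule.span k {v k 1, v k 2} with hW₀
  have hv1 : v k 1 ∈ W₀ := Submodule.subset_span (by simp)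
  have hv2 : v k 2 ∈ W₀ := Submodule.subset_span (by simp)
  have hfin : FiniteDimensional k W₀ := FiniteDimensional.span_of_finite k (by simp)
  have hφ1 : φ (v k 1) ∈ W₀ := h1 ▸ W₀.sub_mem (W₀.smul_mem _ hv1) hv2
  have hφ2 : φ (v k 2) ∈ W₀ := h2 ▸ W₀.sub_mem hv1 hv2
  have hinv : ∀ x ∈ W₀, φ x ∈ W₀ := by
    have : W₀ ≤ W₀.comap φ := by
      refine Submodule.span_le.2 ?_
      rintro x (rfl | rfl)
      exacts [hφ1, hφ2]
    exact this
  have hrange : LinearMap.range (φ ^ 4) ≤ W₀ := by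
    refine range_le_of_v _ _ fun j => ?_
    have hpow : ∀ x ∈ W₀, (φ ^ 4) x ∈ W₀ := fun x hx => by
      simpa [pow_succ, Module.End.mul_apply] using hinv _ (hinv _ (hinv _ (hinv _ hx)))
    by_cases hj1 : j = 1
    · exact hj1 ▸ hpow _ hv1
    by_cases hj2 : j = 2
    · exact hj2 ▸ hpow _ hv2
    rw [pow_four_apply_v φ h3 h4k h4k1 h4k2 h4k3 j hj1 hj2]
    exact W₀.zero_mem
  refine ⟨⟨4, Submodule.finiteDimensional_of_le hrange⟩, ?_⟩
  -- The matrix of `φ` on `span {v₁, v₂}` has determinant `-1`; its inverse gives preimages.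
  have hmem : ∀ n : ℕ, v k 1 ∈ LinearMap.range (φ ^ n) ∧ v k 2 ∈ LinearMap.range (φ ^ n) := by
    intro n
    induction n with
    | zero => exact ⟨⟨_, rfl⟩, ⟨_, rfl⟩⟩
    | succ n ih =>
      obtain ⟨⟨x, hx⟩, ⟨y, hy⟩⟩ := ih
      refine ⟨⟨x - y, ?_⟩, ⟨x - (2 : k) • y, ?_⟩⟩
      · rw [pow_succ', Module.End.mul_apply, map_sub, hx, hy, map_sub, h1, h2]
        module
      · rw [pow_succ', Module.End.mul_apply, map_sub, map_smul, hx, hy, map_sub, map_smul, h1, h2]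
        module
  let c₁ : (ℕ+ →₀ k) →ₗ[k] k := Finsupp.lapply 1
  let c₂ : (ℕ+ →₀ k) →ₗ[k] k := Finsupp.lapply 2
  let A : (ℕ+ →₀ k) →ₗ[k] (ℕ+ →₀ k) := c₁.smulRight (φ (v k 1)) + c₂.smulRight (φ (v k 2))
  have hA : ∀ x, A x = x 1 • φ (v k 1) + x 2 • φ (v k 2) := fun x => rfl
  have hBj : ∀ j : ℕ+, j ≠ 1 → j ≠ 2 → (φ - A) (v k j) = φ (v k j) := by
    intro j hj1 hj2
    rw [LinearMap.sub_apply, hA]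
    simp [v, hj1, hj2]
  have h12 : (1 : ℕ+) ≠ 2 := by decide
  have hB1 : (φ - A) (v k 1) = 0 := by
    rw [LinearMap.sub_apply, hA]
    simp [v]
  have hB2 : (φ - A) (v k 2) = 0 := by
    rw [LinearMap.sub_apply, hA]
    simp [v]
  have hne : ∀ j : ℕ+, 3 ≤ (j : ℕ) → j ≠ 1 ∧ j ≠ 2 := by
    rintro j hj
    constructor <;> rintro rfl <;> revert hj <;> decide
  have hB : (φ - A) ^ 4 = 0 := by
    rw [← LinearMap.range_eq_bot, eq_bot_iff]
    refine range_le_of_v _ _ fun j => ?_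
    rw [Submodule.mem_bot]
    by_cases hj1 : j = 1
    · rw [hj1, pow_succ, Module.End.mul_apply, hB1, map_zero]
    by_cases hj2 : j = 2
    · rw [hj2, pow_succ, Module.End.mul_apply, hB2, map_zero]
    have hge : ∀ m i : ℕ+, 3 ≤ ((4 * m + i : ℕ+) : ℕ) := fun m i => by
      have := m.pos
      simp only [PNat.add_coe, PNat.mul_coe]
      change 3 ≤ 4 * (m : ℕ) + i
      omega
    have hge0 : ∀ m : ℕ+, 3 ≤ ((4 * m : ℕ+) : ℕ) := fun m => by
      have := m.pos
      simp only [PNat.mul_coe]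
      change 3 ≤ 4 * (m : ℕ)
      omega
    have key : ∀ j : ℕ+, 3 ≤ (j : ℕ) → (φ - A) (v k j) = φ (v k j) := fun j hj =>
      hBj j (hne j hj).1 (hne j hj).2
    refine pow_four_apply_v (φ - A) ?_ ?_ ?_ ?_ ?_ j hj1 hj2
    · rw [key 3 le_rfl, h3]
    · intro m; rw [key _ (hge0 m), h4k]
    · intro m; rw [key _ (hge m 1), h4k1]
    · intro m; rw [key _ (hge m 2), h4k2]
    · intro m; rw [key _ (hge m 3), h4k3]
  have hspec : TateTraceSpec φ 1 := by
    rintro W hW hWfin ⟨n, hn⟩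
    have hw1 := hW _ (hn (hmem n).1)
    have hw2 := hW _ (hn (hmem n).2)
    refine (trace_restrict_of_sub_smulRight_nilpotent φ c₁ c₂ _ _ hB W hW hw1 hw2).trans ?_
    change φ (v k 1) 1 + φ (v k 2) 2 = 1
    rw [h1, h2]
    simp [v, h12, h12.symm]
    ring
  have hex : ∃ c, TateTraceSpec φ c := ⟨1, hspec⟩
  -- Testing both values on `span {v₁, v₂}` shows that the chosen value is `1`.
  rw [tateTrace, dif_pos hex, ← hex.choose_spec W₀ hinv hfin ⟨4, hrange⟩]
  exact hspec W₀ hinv hfin ⟨4, hrange⟩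
end
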